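/- arXiv:1711.07409 — 2 statements merged into one kernel-verified Lean document; each statement's English description precedes it below -/
import Mathlib

section
/- Let M be a TS-submodule of C_c^∞(k) or of C_b^∞(k^×). Then for every smooth character χ of T the χ-eigenspace M^{T,χ} is zero, and the space of S-invariants M^S is zero. Moreover, for every smooth character χ of T, the χ-eigenspace of T acting on the quotient C_b^∞(k^×)/C_c^∞(k^×) is one-dimensional. -/
noncomputable section

open scoped Classical

namespace PSW

/-! ### The affine group `λ.b : x ↦ λ·x + b` over a field `K`. -/

@[ext]
structure Aff (K : Type*) [Field K] where
  t : Kˣ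
  s : K

namespace Aff

variable {K : Type*} [Field K]

instance : Mul (Aff K) := ⟨fun g h => ⟨g.t * h.t, g.s + (g.t : K) * h.s⟩⟩
instance : One (Aff K) := ⟨⟨1, 0⟩⟩
instance : Inv (Aff K) := ⟨fun g => ⟨g.t⁻¹, -(((g.t⁻¹ : Kˣ) : K) * g.s)⟩⟩

@[simp] lemma mul_t (g h : Aff K) : (g * h).t = g.t * h.t := rfl
@[simp] lemma mul_s (g h : Aff K) : (g * h).s = g.s + (g.t : K) * h.s := rfl
@[simp] lemma one_t : (1 : Aff K).t = 1 := rfl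
@[simp] lemma one_s : (1 : Aff K).s = 0 := rfl
@[simp] lemma inv_t (g : Aff K) : (g⁻¹).t = g.t⁻¹ := rfl
@[simp] lemma inv_s (g : Aff K) : (g⁻¹).s = -(((g.t⁻¹ : Kˣ) : K) * g.s) := rfl

instance : Group (Aff K) where
  mul_assoc a b c := by
    ext
    · simp [mul_assoc]
    · simp only [mul_s, mul_t, Units.val_mul]; ring
  one_mul a := by ext <;> simp
  mul_one a := by ext <;> simp
  inv_mul_cancel a := by
    ext
    · simp
    · simp

/-- The element `x_λ` of the group `TS`. -/
def xT (u : Kˣ) : Aff K := ⟨u, 0⟩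

/-- The element `s_b` of the group `TS`. -/
def sS (b : K) : Aff K := ⟨1, b⟩

@[simp] lemma xT_t (u : Kˣ) : (xT u : Aff K).t = u := rfl
@[simp] lemma xT_s (u : Kˣ) : (xT u : Aff K).s = 0 := rfl
@[simp] lemma sS_t (b : K) : (sS b : Aff K).t = 1 := rfl
@[simp] lemma sS_s (b : K) : (sS b : Aff K).s = b := rfl

/-- `T ≅ k^×` as a subgroup of `TS`. -/
def xTHom : Kˣ →* Aff K where
  toFun := xT
  map_one' := rfl
  map_mul' u v := by ext <;> simp [xT]

@[simp] lemma xTHom_apply (u : Kˣ) : (xTHom u : Aff K) = xT u := rfl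

lemma mul_sS (g : Aff K) (b : K) : g * sS b = sS ((g.t : K) * b) * g := by
  ext
  · simp
  · simp [add_comm]

lemma sS_mul (b : K) (g : Aff K) : sS b * g = g * sS (((g.t⁻¹ : Kˣ) : K) * b) := by
  ext
  · simp
  · simp [Units.mul_inv_cancel_left, add_comm]

lemma aff_decomp (g : Aff K) : g = xT g.t * sS (((g.t⁻¹ : Kˣ) : K) * g.s) := by
  ext
  · simp
  · simp [Units.mul_inv_cancel_left]

instance [TopologicalSpace K] : TopologicalSpace (Aff K) :=
  TopologicalSpace.induced (fun g : Aff K => ((g.t, g.s) : Kˣ × K)) inferInstance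

end Aff

/-! ### Generalities on representations of a monoid on complex vector spaces. -/

namespace GRep

variable {G : Type*} [Monoid G]

section MonoidModules

variable {V W : Type*} [AddCommMonoid V] [Module ℂ V] [AddCommMonoid W] [Module ℂ W]

/-- A submodule invariant under the representation. -/
def Invariant (ρ : Representation ℂ G V) (U : Submodule ℂ V) : Prop :=
  ∀ (g : G) (v : V), v ∈ U → ρ g v ∈ U

/-- Equivariance of a linear map with respect to two representations. -/
def Equivariant (ρ : Representation ℂ G V) (σ : Representation ℂ G W) (f : V →ₗ[ℂ] W) : Prop :=
  ∀ (g : G) (v : V), f (ρ g v) = σ g (f v)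

/-- Isomorphism of representations. -/
def Iso (ρ : Representation ℂ G V) (σ : Representation ℂ G W) : Prop :=
  ∃ e : V ≃ₗ[ℂ] W, ∀ (g : G) (v : V), e (ρ g v) = σ g (e v)

/-- Irreducibility. -/
def Irred (ρ : Representation ℂ G V) : Prop :=
  Nontrivial V ∧ ∀ U : Submodule ℂ V, Invariant ρ U → U = ⊥ ∨ U = ⊤

/-- Subrepresentation on an invariant submodule. -/
def sub (ρ : Representation ℂ G V) {U : Submodule ℂ V} (hU : Invariant ρ U) :
    Representation ℂ G ↥U where
  toFun g := (ρ g).restrict fun v hv => hU g v hv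
  map_one' := by
    apply LinearMap.ext; intro v; apply Subtype.ext
    simp [LinearMap.restrict_apply]
  map_mul' g h := by
    apply LinearMap.ext; intro v; apply Subtype.ext
    simp [LinearMap.restrict_apply]

@[simp] lemma sub_apply (ρ : Representation ℂ G V) {U : Submodule ℂ V} (hU : Invariant ρ U)
    (g : G) (v : ↥U) : ((sub ρ hU g v : ↥U) : V) = ρ g (v : V) := rfl

lemma ker_invariant (ρ : Representation ℂ G V) (σ : Representation ℂ G W)
    (f : V →ₗ[ℂ] W) (hf : Equivariant ρ σ f) : Invariant ρ (LinearMap.ker f) := by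
  intro g v hv
  rw [LinearMap.mem_ker] at hv ⊢
  rw [hf g v, hv, map_zero]

lemma range_invariant (ρ : Representation ℂ G V) (σ : Representation ℂ G W)
    (f : V →ₗ[ℂ] W) (hf : Equivariant ρ σ f) : Invariant σ (LinearMap.range f) := by
  rintro g w ⟨v, rfl⟩
  exact ⟨ρ g v, hf g v⟩

lemma map_invariant (ρ : Representation ℂ G V) (σ : Representation ℂ G W)
    (f : V →ₗ[ℂ] W) (hf : Equivariant ρ σ f) (U : Submodule ℂ V) (hU : Invariant ρ U) :
    Invariant σ (U.map f) := by
  rintro g w ⟨v, hv, rfl⟩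
  exact ⟨ρ g v, hU g v hv, hf g v⟩

end MonoidModules

section GroupModules

variable {V W : Type*} [AddCommGroup V] [Module ℂ V] [AddCommGroup W] [Module ℂ W]

/-- Quotient representation. -/
def quot (ρ : Representation ℂ G V) (U : Submodule ℂ V) (hU : Invariant ρ U) :
    Representation ℂ G (V ⧸ U) where
  toFun g := U.mapQ U (ρ g) fun v hv => hU g v hv
  map_one' := by
    apply LinearMap.ext; intro x
    obtain ⟨v, rfl⟩ := Submodule.Quotient.mk_surjective U x
    simp [Submodule.mapQ_apply]
  map_mul' g h := by
    apply LinearMap.ext; intro x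
    obtain ⟨v, rfl⟩ := Submodule.Quotient.mk_surjective U x
    simp [Submodule.mapQ_apply]

@[simp] lemma quot_apply (ρ : Representation ℂ G V) (U : Submodule ℂ V) (hU : Invariant ρ U)
    (g : G) (v : V) :
    quot ρ U hU g (Submodule.Quotient.mk v) = Submodule.Quotient.mk (ρ g v) := rfl

/-- Subquotient representation on `B/A`. -/
def subquot (ρ : Representation ℂ G V) {A B : Submodule ℂ V}
    (hA : Invariant ρ A) (hB : Invariant ρ B) :
    Representation ℂ G (↥B ⧸ A.comap B.subtype) :=
  quot (sub ρ hB) (A.comap B.subtype) fun g v hv => hA g v.1 hv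

lemma mkQ_equivariant (ρ : Representation ℂ G V) (U : Submodule ℂ V) (hU : Invariant ρ U) :
    Equivariant ρ (quot ρ U hU) U.mkQ := by
  intro g v
  show Submodule.Quotient.mk (ρ g v) = quot ρ U hU g (Submodule.Quotient.mk v)
  rw [quot_apply]

end GroupModules

end GRep

/-! ### TS-modules: representations of the affine group. -/

/-- A `TS`-module structure on `V` is a representation of the group `TS ≅ Gl_a(1)`. -/
abbrev Rep (K : Type*) [Field K] (V : Type*) [AddCommGroup V] [Module ℂ V] :=
  Representation ℂ (Aff K) V

section RepDefs

open Aff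

variable {K : Type*} [Field K]
variable {V W : Type*} [AddCommGroup V] [Module ℂ V] [AddCommGroup W] [Module ℂ W]

/-- Smoothness: every vector has open stabilizer. -/
def IsSmoothRep [TopologicalSpace K] (ρ : Rep K V) : Prop :=
  ∀ v : V, IsOpen {g : Aff K | ρ g v = v}

/-- Smoothness of a `T`-module, i.e. of a representation of `T ≅ k^×`. -/
def TIsSmooth {X : Type*} [AddCommMonoid X] [Module ℂ X] [TopologicalSpace K]
    (τ : Representation ℂ Kˣ X) : Prop :=
  ∀ x : X, IsOpen {u : Kˣ | τ u x = x}

/-- Smooth character of `T ≅ k^×` (open kernel, equivalently locally constant). -/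
def SmoothMulChar [TopologicalSpace K] (χ : Kˣ →* ℂˣ) : Prop :=
  IsOpen {u : Kˣ | χ u = 1}

/-- The space `V^S` of `S`-invariants. -/
def sInv (ρ : Rep K V) : Submodule ℂ V where
  carrier := {v | ∀ b : K, ρ (sS b) v = v}
  zero_mem' := fun b => map_zero _
  add_mem' {a b} ha hb := fun c => by rw [map_add, ha c, hb c]
  smul_mem' c v hv := fun b => by rw [map_smul, hv b]

@[simp] lemma mem_sInv (ρ : Rep K V) (v : V) :
    v ∈ sInv ρ ↔ ∀ b : K, ρ (sS b) v = v := Iff.rfl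

/-- The `χ`-eigenspace `X^{T,χ}` of a `T`-module. -/
def tEigenT {X : Type*} [AddCommMonoid X] [Module ℂ X]
    (τ : Representation ℂ Kˣ X) (χ : Kˣ →* ℂˣ) : Submodule ℂ X where
  carrier := {x | ∀ u : Kˣ, τ u x = (χ u : ℂ) • x}
  zero_mem' := fun u => by simp
  add_mem' {a b} ha hb := fun u => by rw [map_add, ha u, hb u, smul_add]
  smul_mem' c x hx := fun u => by rw [map_smul, hx u]; exact smul_comm c ((χ u : ℂ)) x

@[simp] lemma mem_tEigenT {X : Type*} [AddCommMonoid X] [Module ℂ X]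
    (τ : Representation ℂ Kˣ X) (χ : Kˣ →* ℂˣ) (x : X) :
    x ∈ tEigenT τ χ ↔ ∀ u : Kˣ, τ u x = (χ u : ℂ) • x := Iff.rfl

/-- The `χ`-eigenspace `V^{T,χ}` of a `TS`-module. -/
def tEigen (ρ : Rep K V) (χ : Kˣ →* ℂˣ) : Submodule ℂ V := tEigenT (ρ.comp xTHom) χ

/-- The kernel of the projection to the `S`-coinvariants `V_S`. -/
def sCoinvKer (ρ : Rep K V) : Submodule ℂ V :=
  Submodule.span ℂ {w : V | ∃ (b : K) (v : V), w = ρ (sS b) v - v}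

/-- The kernel of the projection to the twisted coinvariants `V_{S,ψ'}`. -/
def sTwistKer (ρ : Rep K V) (ψ' : AddChar K ℂ) : Submodule ℂ V :=
  Submodule.span ℂ {w : V | ∃ (b : K) (v : V), w = ρ (sS b) v - ψ' b • v}

/-- The kernel of the projection to the `χ`-coinvariants `X_{T,χ}` of a `T`-module. -/
def tTwistKerT {X : Type*} [AddCommGroup X] [Module ℂ X]
    (τ : Representation ℂ Kˣ X) (χ : Kˣ →* ℂˣ) : Submodule ℂ X :=
  Submodule.span ℂ {w : X | ∃ (u : Kˣ) (x : X), w = τ u x - (χ u : ℂ) • x}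

/-- The kernel of the projection to the `χ`-coinvariants `V_{T,χ}` of a `TS`-module. -/
def tTwistKer (ρ : Rep K V) (χ : Kˣ →* ℂˣ) : Submodule ℂ V := tTwistKerT (ρ.comp xTHom) χ

lemma sCoinvKer_invariant (ρ : Rep K V) : GRep.Invariant ρ (sCoinvKer ρ) := by
  intro g v hv
  have h : sCoinvKer ρ ≤ Submodule.comap (ρ g) (sCoinvKer ρ) := by
    refine Submodule.span_le.2 ?_
    rintro w ⟨b, v', rfl⟩
    simp only [SetLike.mem_coe, Submodule.mem_comap, map_sub]
    have h1 : ρ g (ρ (sS b) v') = ρ (sS ((g.t : K) * b)) (ρ g v') := by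
      rw [← Module.End.mul_apply, ← map_mul, mul_sS, map_mul, Module.End.mul_apply]
    rw [h1]
    exact Submodule.subset_span ⟨(g.t : K) * b, ρ g v', rfl⟩
  exact h hv

lemma sInv_invariant (ρ : Rep K V) : GRep.Invariant ρ (sInv ρ) := by
  intro g v hv
  rw [mem_sInv] at hv ⊢
  intro b
  have h1 : ρ (sS b) (ρ g v) = ρ g (ρ (sS (((g.t⁻¹ : Kˣ) : K) * b)) v) := by
    rw [← Module.End.mul_apply, ← map_mul, sS_mul, map_mul, Module.End.mul_apply]
  rw [h1, hv _]

/-- The `S`-coinvariants `π₀(V) = V_S` as a `TS`-module (`S` acting trivially). -/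
def piZeroRep (ρ : Rep K V) : Rep K (V ⧸ sCoinvKer ρ) :=
  GRep.quot ρ (sCoinvKer ρ) (sCoinvKer_invariant ρ)

/-- The `S`-coinvariants `π₀(V) = V_S` as a `T`-module. -/
def piZeroT (ρ : Rep K V) : Representation ℂ Kˣ (V ⧸ sCoinvKer ρ) :=
  (piZeroRep ρ).comp xTHom

/-- The `T`-module structure on `κ(V) = V^S`. -/
def sInvT (ρ : Rep K V) : Representation ℂ Kˣ ↥(sInv ρ) :=
  (GRep.sub ρ (sInv_invariant ρ)).comp xTHom

/-- A `TS`-module is perfect if all its eigenspaces `V^{T,χ}` for smooth `χ` vanish. -/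
def Perfect [TopologicalSpace K] (ρ : Rep K V) : Prop :=
  ∀ χ : Kˣ →* ℂˣ, SmoothMulChar χ → tEigen ρ χ = ⊥

/-- A finite-dimensional `T`-module is cyclic if each generalized eigenspace is a single
Jordan block; equivalently all eigenspaces `X^{T,χ}` have dimension at most one. -/
def TCyclic {X : Type*} [AddCommGroup X] [Module ℂ X]
    (τ : Representation ℂ Kˣ X) : Prop :=
  ∀ χ : Kˣ →* ℂˣ, Module.finrank ℂ ↥(tEigenT τ χ) ≤ 1

lemma sCoinvKer_le_comap (ρ : Rep K V) (σ : Rep K W)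
    (f : V →ₗ[ℂ] W) (hf : GRep.Equivariant ρ σ f) :
    sCoinvKer ρ ≤ (sCoinvKer σ).comap f := by
  refine Submodule.span_le.2 ?_
  rintro w ⟨b, v, rfl⟩
  simp only [SetLike.mem_coe, Submodule.mem_comap, map_sub]
  rw [hf]
  exact Submodule.subset_span ⟨b, f v, rfl⟩

/-- The map induced by an equivariant map on the `S`-coinvariants `π₀`. -/
def piZeroMap (ρ : Rep K V) (σ : Rep K W) (f : V →ₗ[ℂ] W) (hf : GRep.Equivariant ρ σ f) :
    (V ⧸ sCoinvKer ρ) →ₗ[ℂ] (W ⧸ sCoinvKer σ) :=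
  Submodule.mapQ _ _ f (sCoinvKer_le_comap ρ σ f hf)

lemma piZeroMap_equivariant (ρ : Rep K V) (σ : Rep K W) (f : V →ₗ[ℂ] W)
    (hf : GRep.Equivariant ρ σ f) :
    GRep.Equivariant (piZeroRep ρ) (piZeroRep σ) (piZeroMap ρ σ f hf) := by
  intro g x
  obtain ⟨v, rfl⟩ := Submodule.Quotient.mk_surjective _ x
  show piZeroMap ρ σ f hf (piZeroRep ρ g (Submodule.Quotient.mk v))
      = piZeroRep σ g (piZeroMap ρ σ f hf (Submodule.Quotient.mk v))
  rw [show piZeroRep ρ g (Submodule.Quotient.mk v) = Submodule.Quotient.mk (ρ g v) from rfl]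
  rw [show piZeroMap ρ σ f hf (Submodule.Quotient.mk v) = Submodule.Quotient.mk (f v) from rfl]
  rw [show piZeroMap ρ σ f hf (Submodule.Quotient.mk (ρ g v))
      = Submodule.Quotient.mk (f (ρ g v)) from rfl]
  rw [show piZeroRep σ g (Submodule.Quotient.mk (f v)) = Submodule.Quotient.mk (σ g (f v)) from rfl]
  rw [hf]

lemma kappaImg_invariant (ρ : Rep K V) :
    GRep.Invariant (piZeroT ρ) ((sInv ρ).map (sCoinvKer ρ).mkQ) := by
  rintro u w ⟨v, hv, rfl⟩
  refine ⟨ρ (xT u) v, sInv_invariant ρ (xT u) v hv, ?_⟩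
  rfl

end RepDefs

/-! ### Composition series and degree. -/

/-- A composition series for a `TS`-module, witnessing finite length: a maximal chain of
invariant submodules (the subquotients are then irreducible). -/
structure CompSeries {K : Type*} [Field K] {V : Type*} [AddCommGroup V] [Module ℂ V]
    (ρ : Rep K V) where
  n : ℕ
  W : ℕ → Submodule ℂ V
  bot : W 0 = ⊥
  top : W n = ⊤
  inv : ∀ i, GRep.Invariant ρ (W i)
  lt : ∀ i < n, W i < W (i + 1)
  maximal : ∀ i < n, ∀ C : Submodule ℂ V, GRep.Invariant ρ C → W i ≤ C → C ≤ W (i + 1) →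
    C = W i ∨ C = W (i + 1)

/-- The number of Jordan–Hölder constituents of a composition series isomorphic to a given
representation `σ` (applied with `σ = 𝕊`, this is the degree). -/
def CompSeries.deg {K : Type*} [Field K] {V : Type*} [AddCommGroup V] [Module ℂ V]
    {ρ : Rep K V} (c : CompSeries ρ) {W₀ : Type*} [AddCommMonoid W₀] [Module ℂ W₀]
    (σ : Representation ℂ (Aff K) W₀) : ℕ :=
  (Finset.univ.filter fun i : Fin c.n =>
    GRep.Iso (GRep.subquot ρ (c.inv i.1) (c.inv (i.1 + 1))) σ).card

/-! ### Fiber products of a `T`-module with a `TS`-module over a `T`-module. -/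

section Fiber

open Aff

variable {K : Type*} [Field K]
variable {X Y E : Type*} [AddCommGroup X] [Module ℂ X] [AddCommGroup Y] [Module ℂ Y]
  [AddCommGroup E] [Module ℂ E]

/-- The product `TS`-module `X × E` where `S` acts trivially on the `T`-module `X`. -/
def prodRepTE (τ : Representation ℂ Kˣ X) (ρ : Rep K E) : Rep K (X × E) where
  toFun g := (τ g.t).prodMap (ρ g)
  map_one' := by
    apply LinearMap.ext; rintro ⟨x, v⟩
    simp
  map_mul' g h := by
    apply LinearMap.ext; rintro ⟨x, v⟩
    simp [map_mul]

/-- The underlying space of the fiber product `𝔼[f] = X ×_Y E`. -/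
def fiberKer (f : X →ₗ[ℂ] Y) (q : E →ₗ[ℂ] Y) : Submodule ℂ (X × E) :=
  LinearMap.ker (f.comp (LinearMap.fst ℂ X E) - q.comp (LinearMap.snd ℂ X E))

lemma mem_fiberKer (f : X →ₗ[ℂ] Y) (q : E →ₗ[ℂ] Y) (p : X × E) :
    p ∈ fiberKer f q ↔ f p.1 = q p.2 := by
  simp [fiberKer, sub_eq_zero]

lemma fiber_invariant (τX : Representation ℂ Kˣ X) (ρE : Rep K E)
    (τY : Representation ℂ Kˣ Y) (f : X →ₗ[ℂ] Y) (q : E →ₗ[ℂ] Y)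
    (hf : ∀ (u : Kˣ) (x : X), f (τX u x) = τY u (f x))
    (hq : sCoinvKer ρE ≤ LinearMap.ker q)
    (hqT : ∀ (u : Kˣ) (v : E), q (ρE (xT u) v) = τY u (q v)) :
    GRep.Invariant (prodRepTE τX ρE) (fiberKer f q) := by
  intro g p hp
  rw [mem_fiberKer] at hp ⊢
  have hsb : q (ρE (sS (((g.t⁻¹ : Kˣ) : K) * g.s)) p.2) = q p.2 := by
    have h1 : ρE (sS (((g.t⁻¹ : Kˣ) : K) * g.s)) p.2 - p.2 ∈ sCoinvKer ρE :=
      Submodule.subset_span ⟨_, _, rfl⟩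
    have h2 := hq h1
    rw [LinearMap.mem_ker, map_sub, sub_eq_zero] at h2
    exact h2
  have hdecomp : ρE g p.2 = ρE (xT g.t) (ρE (sS (((g.t⁻¹ : Kˣ) : K) * g.s)) p.2) := by
    conv_lhs => rw [aff_decomp g]
    rw [map_mul, Module.End.mul_apply]
  have h1 : ((prodRepTE τX ρE) g p).1 = τX g.t p.1 := rfl
  have h2 : ((prodRepTE τX ρE) g p).2 = ρE g p.2 := rfl
  rw [h1, h2, hf, hp, hdecomp, hqT, hsb]

end Fiber

/-! ### Jordan blocks of finite-dimensional `T`-modules. -/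

section Jordan

variable {K : Type*} [Field K]
variable {X : Type*} [AddCommGroup X] [Module ℂ X]

/-- A Jordan block of a `T`-module: a nonzero indecomposable invariant direct summand. -/
def IsJordanBlock (τ : Representation ℂ Kˣ X) (J : Submodule ℂ X) : Prop :=
  J ≠ ⊥ ∧ GRep.Invariant τ J ∧ (∃ C : Submodule ℂ X, GRep.Invariant τ C ∧ IsCompl J C) ∧
    ∀ A B : Submodule ℂ X, GRep.Invariant τ A → GRep.Invariant τ B → A ≤ J → B ≤ J →
      A ⊓ B = ⊥ → A ⊔ B = J → A = ⊥ ∨ B = ⊥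

end Jordan

/-! ### Invariants and coinvariants for a normal subgroup of an arbitrary group. -/

section Grp

variable {Γ : Type*} [Group Γ]
variable {V W : Type*} [AddCommGroup V] [Module ℂ V] [AddCommGroup W] [Module ℂ W]

/-- Invariants `V^N` under a subgroup `N`. -/
def grpInv (ρ : Representation ℂ Γ V) (N : Subgroup Γ) : Submodule ℂ V where
  carrier := {v | ∀ n ∈ N, ρ n v = v}
  zero_mem' := fun n _ => map_zero _
  add_mem' {a b} ha hb := fun n hn => by rw [map_add, ha n hn, hb n hn]
  smul_mem' c v hv := fun n hn => by rw [map_smul, hv n hn]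

@[simp] lemma mem_grpInv (ρ : Representation ℂ Γ V) (N : Subgroup Γ) (v : V) :
    v ∈ grpInv ρ N ↔ ∀ n ∈ N, ρ n v = v := Iff.rfl

/-- The kernel of the projection to the coinvariants `V_N` under a subgroup `N`. -/
def grpCoinvKer (ρ : Representation ℂ Γ V) (N : Subgroup Γ) : Submodule ℂ V :=
  Submodule.span ℂ {w : V | ∃ n ∈ N, ∃ v : V, w = ρ n v - v}

lemma grpInv_invariant (ρ : Representation ℂ Γ V) (N : Subgroup Γ) [hN : N.Normal] :
    GRep.Invariant ρ (grpInv ρ N) := by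
  intro γ v hv
  rw [mem_grpInv] at hv ⊢
  intro n hn
  have hmem : γ⁻¹ * n * γ ∈ N := by
    have := hN.conj_mem n hn γ⁻¹
    simpa using this
  have key : ρ n (ρ γ v) = ρ γ (ρ (γ⁻¹ * n * γ) v) := by
    rw [← Module.End.mul_apply, ← map_mul, ← Module.End.mul_apply, ← map_mul]
    congr 1
    group
  rw [key, hv _ hmem]

lemma grpCoinvKer_invariant (ρ : Representation ℂ Γ V) (N : Subgroup Γ) [hN : N.Normal] :
    GRep.Invariant ρ (grpCoinvKer ρ N) := by
  intro γ v hv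
  have h : grpCoinvKer ρ N ≤ Submodule.comap (ρ γ) (grpCoinvKer ρ N) := by
    refine Submodule.span_le.2 ?_
    rintro w ⟨n, hn, v', rfl⟩
    simp only [SetLike.mem_coe, Submodule.mem_comap, map_sub]
    have key : ρ γ (ρ n v') = ρ (γ * n * γ⁻¹) (ρ γ v') := by
      rw [← Module.End.mul_apply, ← map_mul, ← Module.End.mul_apply, ← map_mul]
      congr 1
      group
    rw [key]
    exact Submodule.subset_span ⟨γ * n * γ⁻¹, hN.conj_mem n hn γ, ρ γ v', rfl⟩
  exact h hv

/-- The map induced on `N`-invariants by an equivariant map. -/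
def grpInvRestrict (ρ : Representation ℂ Γ V) (σ : Representation ℂ Γ W) (N : Subgroup Γ)
    (f : V →ₗ[ℂ] W) (hf : GRep.Equivariant ρ σ f) : ↥(grpInv ρ N) →ₗ[ℂ] ↥(grpInv σ N) :=
  f.restrict (fun v hv => by
    rw [mem_grpInv] at hv ⊢
    intro n hn
    rw [← hf n v, hv n hn])

lemma grpCoinvKer_le_comap (ρ : Representation ℂ Γ V) (σ : Representation ℂ Γ W) (N : Subgroup Γ)
    (f : V →ₗ[ℂ] W) (hf : GRep.Equivariant ρ σ f) :
    grpCoinvKer ρ N ≤ (grpCoinvKer σ N).comap f := by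
  refine Submodule.span_le.2 ?_
  rintro w ⟨n, hn, v, rfl⟩
  simp only [SetLike.mem_coe, Submodule.mem_comap, map_sub]
  rw [hf]
  exact Submodule.subset_span ⟨n, hn, f v, rfl⟩

/-- The map induced on `N`-coinvariants by an equivariant map. -/
def grpCoinvMap (ρ : Representation ℂ Γ V) (σ : Representation ℂ Γ W) (N : Subgroup Γ)
    (f : V →ₗ[ℂ] W) (hf : GRep.Equivariant ρ σ f) :
    (V ⧸ grpCoinvKer ρ N) →ₗ[ℂ] (W ⧸ grpCoinvKer σ N) :=
  Submodule.mapQ _ _ f (grpCoinvKer_le_comap ρ σ N f hf)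

end Grp

/-! ### Tate L-factors of finite-dimensional `T`-modules. -/

section Lfactor

variable {K : Type*} [NontriviallyNormedField K]
variable {X : Type*} [AddCommGroup X] [Module ℂ X]

/-- The part of a `T`-module where the `χ`-twisted action is unramified
(trivial on the norm-one units). -/
def unrPart (τ : Representation ℂ Kˣ X) (χ : Kˣ →* ℂˣ) : Submodule ℂ X where
  carrier := {x | ∀ u : Kˣ, ‖(u : K)‖ = 1 → (χ u : ℂ) • τ u x = x}
  zero_mem' := fun u _ => by simp
  add_mem' {a b} ha hb := fun u hu => by rw [map_add, smul_add, ha u hu, hb u hu]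
  smul_mem' c x hx := fun u hu => by
    rw [map_smul, smul_comm, hx u hu]

lemma unrPart_stable (τ : Representation ℂ Kˣ X) (χ : Kˣ →* ℂˣ) (ϖ : Kˣ) :
    ∀ x ∈ unrPart τ χ, ((χ ϖ : ℂ) • τ ϖ) x ∈ unrPart τ χ := by
  intro x hx u hu
  have comm : τ u (τ ϖ x) = τ ϖ (τ u x) := by
    rw [← Module.End.mul_apply, ← map_mul, mul_comm, map_mul, Module.End.mul_apply]
  calc (χ u : ℂ) • τ u (((χ ϖ : ℂ) • τ ϖ) x)
      = (χ ϖ : ℂ) • ((χ u : ℂ) • τ u (τ ϖ x)) := by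
        rw [LinearMap.smul_apply, map_smul, smul_comm]
    _ = (χ ϖ : ℂ) • τ ϖ ((χ u : ℂ) • τ u x) := by rw [comm, map_smul]
    _ = ((χ ϖ : ℂ) • τ ϖ) x := by rw [hx u hu, LinearMap.smul_apply]

/-- The twisted uniformizer action on the unramified part. -/
def twistOp (τ : Representation ℂ Kˣ X) (χ : Kˣ →* ℂˣ) (ϖ : Kˣ) :
    ↥(unrPart τ χ) →ₗ[ℂ] ↥(unrPart τ χ) :=
  LinearMap.restrict ((χ ϖ : ℂ) • τ ϖ) (unrPart_stable τ χ ϖ)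

/-- The Tate `L`-factor `L(s, χ ⊗ X) = det(1 - q^{-s}·(χ·τ)(ϖ) | X^{unr,χ})⁻¹` of a
(finite-dimensional) `T`-module `X`, relative to a uniformizer `ϖ`. -/
def Lfactor (τ : Representation ℂ Kˣ X) (χ : Kˣ →* ℂˣ) (ϖ : Kˣ) (s : ℂ) : ℂ :=
  (LinearMap.det (LinearMap.id - (‖(ϖ : K)‖ : ℂ) ^ s • twistOp τ χ ϖ))⁻¹

end Lfactor

/-! ### The concrete `TS`-modules `𝕊`, `C_c^∞(k)`, `C_b^∞(k^×)` and `𝔼[χ]`. -/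

section Concrete

open Aff

variable (K : Type*) [NontriviallyNormedField K]

/-- The representation of `TS` on functions on `k^×`:
`(s_b g)(x) = ψ(bx) g(x)`, `(x_λ g)(x) = g(xλ)`. -/
def repCx (ψ : AddChar K ℂ) : Rep K (Kˣ → ℂ) where
  toFun g :=
    { toFun := fun f x => ψ (g.s * (x : K)) * f (x * g.t)
      map_add' := fun f₁ f₂ => by funext x; simp [mul_add]
      map_smul' := fun c f => by
        funext x
        simp only [Pi.smul_apply, smul_eq_mul, RingHom.id_apply]
        ring }
  map_one' := by
    apply LinearMap.ext; intro f; funext x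
    simp
  map_mul' g h := by
    apply LinearMap.ext; intro f; funext x
    show ψ ((g.s + (g.t : K) * h.s) * (x : K)) * f (x * (g.t * h.t))
        = ψ (g.s * (x : K)) * (ψ (h.s * ((x * g.t : Kˣ) : K)) * f (x * g.t * h.t))
    have harg : (g.s + (g.t : K) * h.s) * (x : K)
        = g.s * (x : K) + h.s * ((x * g.t : Kˣ) : K) := by
      push_cast
      ring
    rw [harg, AddChar.map_add_eq_mul, ← mul_assoc x g.t h.t]
    ring

@[simp] lemma repCx_apply (ψ : AddChar K ℂ) (g : Aff K) (f : Kˣ → ℂ) (x : Kˣ) :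
    repCx K ψ g f x = ψ (g.s * (x : K)) * f (x * g.t) := rfl

/-- The `χ`-twisted representation of `TS` on functions on `k`:
`(s_b g)(x) = ψ(bx) g(x)`, `(x_λ g)(x) = χ(λ) g(xλ)`.  (Take `χ = 1` for the
untwisted action on `C_c^∞(k)`; the module `𝔼[χ]` is `C_c^∞(k)` with the twisted action.) -/
def repCc (ψ : AddChar K ℂ) (χ : Kˣ →* ℂˣ) : Rep K (K → ℂ) where
  toFun g :=
    { toFun := fun f x => (χ g.t : ℂ) * ψ (g.s * x) * f (x * (g.t : K))
      map_add' := fun f₁ f₂ => by funext x; simp [mul_add]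
      map_smul' := fun c f => by
        funext x
        simp only [Pi.smul_apply, smul_eq_mul, RingHom.id_apply]
        ring }
  map_one' := by
    apply LinearMap.ext; intro f; funext x
    simp
  map_mul' g h := by
    apply LinearMap.ext; intro f; funext x
    show (χ (g.t * h.t) : ℂ) * ψ ((g.s + (g.t : K) * h.s) * x) * f (x * ((g.t * h.t : Kˣ) : K))
        = (χ g.t : ℂ) * ψ (g.s * x) * ((χ h.t : ℂ) * ψ (h.s * (x * (g.t : K)))
            * f (x * (g.t : K) * (h.t : K)))
    have harg : (g.s + (g.t : K) * h.s) * x = g.s * x + h.s * (x * (g.t : K)) := by ring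
    have harg2 : x * ((g.t * h.t : Kˣ) : K) = x * (g.t : K) * (h.t : K) := by
      push_cast
      ring
    rw [harg, harg2, AddChar.map_add_eq_mul, map_mul]
    push_cast
    ring

@[simp] lemma repCc_apply (ψ : AddChar K ℂ) (χ : Kˣ →* ℂˣ) (g : Aff K) (f : K → ℂ) (x : K) :
    repCc K ψ χ g f x = (χ g.t : ℂ) * ψ (g.s * x) * f (x * (g.t : K)) := rfl

/-- The one-dimensional `TS`-module `ℂ_χ` on which `S` acts trivially and `x_λ` by `χ(λ)`. -/
def chiRep (χ : Kˣ →* ℂˣ) : Rep K ℂ where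
  toFun g := (χ g.t : ℂ) • LinearMap.id
  map_one' := by
    apply LinearMap.ext; intro c
    simp
  map_mul' g h := by
    apply LinearMap.ext; intro c
    simp only [mul_t, map_mul, LinearMap.smul_apply, LinearMap.id_apply, Module.End.mul_apply,
      Units.val_mul, smul_eq_mul]
    ring

/-- `C_c^∞(k)`: locally constant, compactly supported functions on `k`. -/
def CcK : Submodule ℂ (K → ℂ) where
  carrier := {f | IsLocallyConstant f ∧ HasCompactSupport f}
  zero_mem' := ⟨IsLocallyConstant.const 0, by
    rw [hasCompactSupport_def]
    simp⟩
  add_mem' {a b} ha hb := ⟨ha.1.comp₂ hb.1 (· + ·), ha.2.add hb.2⟩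
  smul_mem' c f hf := by
    refine ⟨?_, hf.2.mono (Function.support_const_smul_subset c f)⟩
    exact hf.1.comp (fun z => c * z)

@[simp] lemma mem_CcK (f : K → ℂ) :
    f ∈ CcK K ↔ IsLocallyConstant f ∧ HasCompactSupport f := Iff.rfl

/-- `𝕊 = C_c^∞(k^×)`: locally constant, compactly supported functions on `k^×`. -/
def SSx : Submodule ℂ (Kˣ → ℂ) where
  carrier := {f | IsLocallyConstant f ∧ HasCompactSupport f}
  zero_mem' := ⟨IsLocallyConstant.const 0, by
    rw [hasCompactSupport_def]
    simp⟩
  add_mem' {a b} ha hb := ⟨ha.1.comp₂ hb.1 (· + ·), ha.2.add hb.2⟩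
  smul_mem' c f hf := by
    refine ⟨?_, hf.2.mono (Function.support_const_smul_subset c f)⟩
    exact hf.1.comp (fun z => c * z)

@[simp] lemma mem_SSx (f : Kˣ → ℂ) :
    f ∈ SSx K ↔ IsLocallyConstant f ∧ HasCompactSupport f := Iff.rfl

/-- `C_b^∞(k^×)`: locally constant functions on `k^×` whose support has compact closure
in `k`. -/
def Cb : Submodule ℂ (Kˣ → ℂ) where
  carrier := {f | IsLocallyConstant f ∧
    IsCompact (closure (((↑) : Kˣ → K) '' Function.support f))}
  zero_mem' := ⟨IsLocallyConstant.const 0, by simp⟩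
  add_mem' {a b} ha hb := by
    refine ⟨ha.1.comp₂ hb.1 (· + ·), ?_⟩
    refine IsCompact.of_isClosed_subset (ha.2.union hb.2) isClosed_closure ?_
    refine closure_minimal ?_ (ha.2.isClosed.union hb.2.isClosed)
    refine (Set.image_mono (Function.support_add _ _)).trans ?_
    rw [Set.image_union]
    exact Set.union_subset_union subset_closure subset_closure
  smul_mem' c f hf := by
    refine ⟨hf.1.comp (fun z => c * z), ?_⟩
    refine IsCompact.of_isClosed_subset hf.2 isClosed_closure ?_
    refine closure_mono ?_
    exact Set.image_mono (Function.support_const_smul_subset c f)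

@[simp] lemma mem_Cb (f : Kˣ → ℂ) :
    f ∈ Cb K ↔ IsLocallyConstant f ∧
      IsCompact (closure (((↑) : Kˣ → K) '' Function.support f)) := Iff.rfl

variable {K}

lemma SSx_invariant (ψ : AddChar K ℂ) (hψlc : IsLocallyConstant (⇑ψ)) :
    GRep.Invariant (repCx K ψ) (SSx K) := by
  rintro g f hf
  rw [mem_SSx] at hf ⊢
  obtain ⟨hlc, hcs⟩ := hf
  have heq : repCx K ψ g f
      = (fun x : Kˣ => ψ (g.s * (x : K))) * (f ∘ (Homeomorph.mulRight g.t)) := rfl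
  constructor
  · rw [heq]
    refine IsLocallyConstant.mul ?_ ?_
    · exact hψlc.comp_continuous (continuous_const.mul Units.continuous_val)
    · exact hlc.comp_continuous (Homeomorph.mulRight g.t).continuous
  · rw [heq]
    exact (hcs.comp_homeomorph (Homeomorph.mulRight g.t)).mul_left

lemma CcK_invariant (ψ : AddChar K ℂ) (hψlc : IsLocallyConstant (⇑ψ)) (χ : Kˣ →* ℂˣ) :
    GRep.Invariant (repCc K ψ χ) (CcK K) := by
  rintro g f hf
  rw [mem_CcK] at hf ⊢
  obtain ⟨hlc, hcs⟩ := hf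
  have hne : ((g.t : Kˣ) : K) ≠ 0 := g.t.ne_zero
  have heq : repCc K ψ χ g f
      = (fun x : K => (χ g.t : ℂ) * ψ (g.s * x)) * (f ∘ (Homeomorph.mulRight₀ (g.t : K) hne)) :=
    rfl
  constructor
  · rw [heq]
    refine IsLocallyConstant.mul ?_ ?_
    · exact ((hψlc.comp_continuous (continuous_const.mul continuous_id)).comp
        (fun z => (χ g.t : ℂ) * z))
    · exact hlc.comp_continuous (Homeomorph.mulRight₀ (g.t : K) hne).continuous
  · rw [heq]
    exact (hcs.comp_homeomorph (Homeomorph.mulRight₀ (g.t : K) hne)).mul_left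

/-- The `TS`-module `𝕊 = C_c^∞(k^×)`. -/
def SRep (ψ : AddChar K ℂ) (hψlc : IsLocallyConstant (⇑ψ)) : Rep K ↥(SSx K) :=
  GRep.sub (repCx K ψ) (SSx_invariant ψ hψlc)

/-- The `TS`-module `𝔼[χ]`, i.e. `C_c^∞(k)` with the `χ`-twisted action. -/
def ERep (ψ : AddChar K ℂ) (hψlc : IsLocallyConstant (⇑ψ)) (χ : Kˣ →* ℂˣ) : Rep K ↥(CcK K) :=
  GRep.sub (repCc K ψ χ) (CcK_invariant ψ hψlc χ)

/-- The `TS`-module `𝕊^s`, a direct sum of `s` copies of `𝕊`. -/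
def SRepPow (ψ : AddChar K ℂ) (hψlc : IsLocallyConstant (⇑ψ)) (s : ℕ) :
    Rep K (Fin s → ↥(SSx K)) where
  toFun g := LinearMap.pi fun i => (SRep ψ hψlc g).comp (LinearMap.proj i)
  map_one' := by
    apply LinearMap.ext; intro v; funext i
    simp
  map_mul' g h := by
    apply LinearMap.ext; intro v; funext i
    simp [map_mul]

/-- The submodule `E` of `C_b^∞(k^×)` consisting of functions which are `χ`-eigenvectors
modulo `𝕊`; the quotient `E/𝕊` is the `χ`-eigenspace of `C_b^∞(k^×)/𝕊`. -/
def quotEigen (ψ : AddChar K ℂ) (χ : Kˣ →* ℂˣ) : Submodule ℂ (Kˣ → ℂ) where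
  carrier := {f | f ∈ Cb K ∧ ∀ u : Kˣ, repCx K ψ (Aff.xT u) f - (χ u : ℂ) • f ∈ SSx K}
  zero_mem' := ⟨(Cb K).zero_mem, fun u => by simpa using (SSx K).zero_mem⟩
  add_mem' {a b} ha hb := by
    refine ⟨(Cb K).add_mem ha.1 hb.1, fun u => ?_⟩
    rw [map_add, smul_add, add_sub_add_comm]
    exact (SSx K).add_mem (ha.2 u) (hb.2 u)
  smul_mem' c f hf := by
    refine ⟨(Cb K).smul_mem c hf.1, fun u => ?_⟩
    rw [map_smul, smul_comm, ← smul_sub]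
    exact (SSx K).smul_mem c (hf.2 u)

/-- Evaluation at `0 ∈ k`, realizing the quotient map `𝔼[χ] → ℂ_χ` with kernel `𝕊`. -/
def ev0 : ↥(CcK K) →ₗ[ℂ] ℂ where
  toFun f := (f : K → ℂ) 0
  map_add' f g := rfl
  map_smul' c f := rfl

end Concrete

/-! ### The diagonal torus in GL(2). -/

section GL2

variable {K : Type*} [Field K]

/-- The diagonal element `diag(a, b)` of `GL(2, K)`. -/
def diagGL (a b : Kˣ) : Matrix.GeneralLinearGroup (Fin 2) K where
  val := Matrix.diagonal ![(a : K), (b : K)]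
  inv := Matrix.diagonal ![((a : K))⁻¹, ((b : K))⁻¹]
  val_inv := by
    ext i j
    fin_cases i <;> fin_cases j <;>
      simp [Matrix.mul_apply, Fin.sum_univ_two, Matrix.diagonal, Matrix.one_apply,
        a.ne_zero, b.ne_zero]
  inv_val := by
    ext i j
    fin_cases i <;> fin_cases j <;>
      simp [Matrix.mul_apply, Fin.sum_univ_two, Matrix.diagonal, Matrix.one_apply,
        a.ne_zero, b.ne_zero]

end GL2

lemma aux_mem_Cb_iff {K : Type*} [NontriviallyNormedField K] [ProperSpace K] (f : Kˣ → ℂ) :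
    f ∈ Cb K ↔ IsLocallyConstant f ∧ ∃ R : ℝ, ∀ x : Kˣ, f x ≠ 0 → ‖(x : K)‖ ≤ R := by
  rw [mem_Cb]
  refine and_congr_right fun _ => ⟨fun h => ?_, ?_⟩
  · obtain ⟨R, hR⟩ := h.isBounded.exists_norm_le
    exact ⟨R, fun x hx => hR _ (subset_closure ⟨x, hx, rfl⟩)⟩
  · rintro ⟨R, hR⟩
    refine (isCompact_closedBall (0 : K) R).of_isClosed_subset isClosed_closure ?_
    refine closure_minimal ?_ Metric.isClosed_closedBall
    rintro _ ⟨x, hx, rfl⟩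
    simpa using hR x hx

lemma aux_isCompact_annulus {K : Type*} [NontriviallyNormedField K] [ProperSpace K]
    (a b : ℝ) (ha : 0 < a) : IsCompact {u : Kˣ | a ≤ ‖(u : K)‖ ∧ ‖(u : K)‖ ≤ b} := by
  rw [Units.isEmbedding_val₀.isCompact_iff]
  have h : ((↑) : Kˣ → K) '' {u : Kˣ | a ≤ ‖(u : K)‖ ∧ ‖(u : K)‖ ≤ b}
      = Metric.closedBall 0 b ∩ {x : K | a ≤ ‖x‖} := by
    ext x
    constructor
    · rintro ⟨u, hu, rfl⟩
      exact ⟨by simpa using hu.2, hu.1⟩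
    · rintro ⟨h1, h2⟩
      have hx : x ≠ 0 := by
        rintro rfl
        simp at h2
        linarith
      exact ⟨Units.mk0 x hx, ⟨h2, by simpa using h1⟩, rfl⟩
  rw [h]
  exact (isCompact_closedBall _ _).inter_right (isClosed_le continuous_const continuous_norm)

lemma aux_mem_SSx_iff {K : Type*} [NontriviallyNormedField K] [ProperSpace K] (f : Kˣ → ℂ)
    (hf : f ∈ Cb K) :
    f ∈ SSx K ↔ ∃ ε : ℝ, 0 < ε ∧ ∀ x : Kˣ, ‖(x : K)‖ < ε → f x = 0 := by
  rw [aux_mem_Cb_iff] at hf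
  obtain ⟨hlc, R, hR⟩ := hf
  rw [mem_SSx]
  constructor
  · rintro ⟨_, hc⟩
    have hcont : Continuous fun u : Kˣ => ((u⁻¹ : Kˣ) : K) :=
      Units.continuous_val.comp continuous_inv
    obtain ⟨C, hC⟩ := (IsCompact.image hc hcont).isBounded.exists_norm_le
    refine ⟨(max C 1)⁻¹, by positivity, fun x hx => ?_⟩
    by_contra hne
    have h1 : ‖((x⁻¹ : Kˣ) : K)‖ ≤ C := hC _ ⟨x, subset_closure hne, rfl⟩
    have hpos : 0 < ‖(x : K)‖ := norm_pos_iff.2 x.ne_zero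
    rw [Units.val_inv_eq_inv_val, norm_inv] at h1
    have h2 : (max C 1) < ‖(x : K)‖⁻¹ := by
      rw [lt_inv_comm₀ (by positivity) hpos]
      exact hx
    exact absurd (h1.trans (le_max_left C 1)) (not_le.2 h2)
  · rintro ⟨ε, hε, h⟩
    refine ⟨hlc, HasCompactSupport.intro (aux_isCompact_annulus (K := K) ε R hε) ?_⟩
    intro x hx
    by_contra hne
    refine hx ⟨?_, hR x hne⟩
    by_contra hlt
    exact hne (h x (not_le.1 hlt))

lemma aux_exists_psi {K : Type*} [NontriviallyNormedField K] (ψ : AddChar K ℂ) (hψne : ψ ≠ 1)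
    (x : K) (hx : x ≠ 0) : ∃ b : K, ψ (b * x) ≠ 1 := by
  by_contra hcon
  push Not at hcon
  apply hψne
  ext y
  have := hcon (y * x⁻¹)
  rw [inv_mul_cancel_right₀ hx] at this
  simpa using this

lemma aux_zero {K : Type*} [NontriviallyNormedField K] (f : K → ℂ) (hf : IsLocallyConstant f)
    (h : ∀ x : K, x ≠ 0 → f x = 0) : f = 0 := by
  funext x
  by_cases hx : x = 0
  · subst hx
    have h1 : ∀ᶠ y in nhds (0 : K), f y = f 0 := hf.eventually_eq 0
    have h2 : ∀ᶠ y in nhdsWithin (0 : K) {0}ᶜ, f y = f 0 := h1.filter_mono nhdsWithin_le_nhds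
    obtain ⟨y, hy, hy0⟩ := (h2.and self_mem_nhdsWithin).exists
    rw [← hy, h y hy0]; rfl
  · exact h x hx

lemma aux_exists_large {K : Type*} [NontriviallyNormedField K] (R : ℝ) :
    ∃ u : Kˣ, R < ‖(u : K)‖ := by
  obtain ⟨x, hx⟩ := NormedField.exists_lt_norm K (max R 0)
  have h0 : x ≠ 0 := by
    rintro rfl
    simp at hx
  exact ⟨Units.mk0 x h0, (le_max_left _ _).trans_lt hx⟩

lemma aux_isLocallyConstant_char {K : Type*} [NontriviallyNormedField K] (χ : Kˣ →* ℂˣ)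
    (hχ : SmoothMulChar χ) : IsLocallyConstant (fun u : Kˣ => (χ u : ℂ)) := by
  rw [IsLocallyConstant.iff_eventually_eq]
  intro u
  have h1 : ∀ᶠ v in nhds (1 : Kˣ), χ v = 1 := hχ.mem_nhds (by simp)
  have h2 : Filter.Tendsto (fun v : Kˣ => u⁻¹ * v) (nhds u) (nhds 1) := by
    have : Continuous fun v : Kˣ => u⁻¹ * v := by fun_prop
    simpa using this.tendsto u
  filter_upwards [h2.eventually h1] with v hv
  rw [map_mul, map_inv, inv_mul_eq_one] at hv
  rw [hv]

/-- A locally constant function which is asymptotically invariant under each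
multiplication is constant near `0` (Baire category). -/
lemma aux_const {K : Type*} [NontriviallyNormedField K] [ProperSpace K] (g : Kˣ → ℂ)
    (hg : IsLocallyConstant g)
    (h : ∀ u : Kˣ, ∃ ε : ℝ, 0 < ε ∧ ∀ x : Kˣ, ‖(x : K)‖ < ε → g (x * u) = g x) :
    ∃ (c : ℂ) (ε : ℝ), 0 < ε ∧ ∀ x : Kˣ, ‖(x : K)‖ < ε → g x = c := by
  have hlcs : LocallyCompactSpace Kˣ := Units.isOpenEmbedding_val.locallyCompactSpace
  let E : ℕ → Set Kˣ := fun n =>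
    {u | ∀ x : Kˣ, ‖(x : K)‖ < 1 / ((n : ℝ) + 1) → g (x * u) = g x}
  have hclosed : ∀ n, IsClosed (E n) := by
    intro n
    have : E n = ⋂ (x : Kˣ) (_ : ‖(x : K)‖ < 1 / ((n : ℝ) + 1)), {u | g (x * u) = g x} := by
      ext u; simp [E]
    rw [this]
    refine isClosed_iInter fun x => isClosed_iInter fun _ => ?_
    exact isClosed_eq (hg.continuous.comp (by fun_prop)) continuous_const
  have hU : ⋃ n, E n = Set.univ := by
    refine Set.eq_univ_of_forall fun u => ?_
    obtain ⟨ε, hε, hu⟩ := h u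
    obtain ⟨n, hn⟩ := exists_nat_one_div_lt hε
    exact Set.mem_iUnion.2 ⟨n, fun x hx => hu x (hx.trans hn)⟩
  obtain ⟨n, u₀, hu₀⟩ := nonempty_interior_of_iUnion_of_closed hclosed hU
  have hu₀n : ‖(u₀ : K)‖ > 0 := norm_pos_iff.2 u₀.ne_zero
  have hδ : ∃ δ : ℝ, 0 < δ ∧ ∀ᶠ v in nhds (1 : Kˣ), ∀ x : Kˣ, ‖(x : K)‖ < δ →
      g (x * v) = g x := by
    refine ⟨‖(u₀ : K)‖ * (1 / ((n : ℝ) + 1)), by positivity, ?_⟩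
    have ht : Filter.Tendsto (fun v : Kˣ => u₀ * v) (nhds 1) (nhds u₀) := by
      have : Continuous fun v : Kˣ => u₀ * v := by fun_prop
      simpa using this.tendsto 1
    filter_upwards [ht.eventually (mem_interior_iff_mem_nhds.1 hu₀)] with v hv x hx
    have hsm : ‖((x * u₀⁻¹ : Kˣ) : K)‖ < 1 / ((n : ℝ) + 1) := by
      rw [Units.val_mul, Units.val_inv_eq_inv_val, norm_mul, norm_inv, ← div_eq_mul_inv,
        div_lt_iff₀ hu₀n, mul_comm]
      exact hx
    have h1 := hv _ hsm
    have h2 := interior_subset hu₀ _ hsm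
    rw [← mul_assoc, inv_mul_cancel_right] at h1
    rw [inv_mul_cancel_right] at h2
    rw [h1, h2]
  obtain ⟨δ, hδ0, hδ⟩ := hδ
  obtain ⟨p, hp0, hp1⟩ := NormedField.exists_norm_lt_one K
  let ϖ : Kˣ := Units.mk0 p (norm_pos_iff.1 hp0)
  have hA := aux_isCompact_annulus (K := K) ‖p‖ 1 hp0
  have hunif : ∃ ε : ℝ, 0 < ε ∧ ∀ u ∈ {u : Kˣ | ‖p‖ ≤ ‖(u : K)‖ ∧ ‖(u : K)‖ ≤ 1},
      ∀ x : Kˣ, ‖(x : K)‖ < ε → g (x * u) = g x := by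
    refine hA.induction_on (p := fun s => ∃ ε : ℝ, 0 < ε ∧ ∀ u ∈ s,
      ∀ x : Kˣ, ‖(x : K)‖ < ε → g (x * u) = g x) ⟨1, one_pos, by simp⟩ ?_ ?_ ?_
    · rintro s t hst ⟨ε, hε, H⟩
      exact ⟨ε, hε, fun u hu => H u (hst hu)⟩
    · rintro s t ⟨ε, hε, H⟩ ⟨ε', hε', H'⟩
      refine ⟨min ε ε', lt_min hε hε', ?_⟩
      rintro u (hu | hu) x hx
      · exact H u hu x (hx.trans_le (min_le_left _ _))
      · exact H' u hu x (hx.trans_le (min_le_right _ _))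
    · intro u hu
      obtain ⟨ε, hε, H⟩ := h u
      have ht : Filter.Tendsto (fun v : Kˣ => u⁻¹ * v) (nhds u) (nhds 1) := by
        have : Continuous fun v : Kˣ => u⁻¹ * v := by fun_prop
        simpa using this.tendsto u
      refine ⟨_, nhdsWithin_le_nhds (ht.eventually hδ), min ε δ, lt_min hε hδ0, ?_⟩
      intro v hv x hx
      have hxu : ‖((x * u : Kˣ) : K)‖ < δ := by
        rw [Units.val_mul, norm_mul]
        calc ‖(x : K)‖ * ‖(u : K)‖ ≤ ‖(x : K)‖ * 1 := by gcongr; exact hu.2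
          _ < δ := by rw [mul_one]; exact hx.trans_le (min_le_right _ _)
      have h1 := hv _ hxu
      rw [mul_assoc, mul_inv_cancel_left] at h1
      rw [h1, H x (hx.trans_le (min_le_left _ _))]
  obtain ⟨ε, hε, H⟩ := hunif
  have hpow : ∀ (m : ℕ) (x : Kˣ), ‖(x : K)‖ < ε → g (x * ϖ ^ m) = g x := by
    intro m
    induction m with
    | zero => intro x _; simp
    | succ m ih =>
      intro x hx
      rw [pow_succ, ← mul_assoc, H ϖ ⟨le_refl _, hp1.le⟩, ih x hx]
      rw [Units.val_mul, Units.val_pow_eq_pow_val, norm_mul, norm_pow]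
      refine lt_of_le_of_lt ?_ hx
      exact mul_le_of_le_one_right (norm_nonneg _) (pow_le_one₀ (norm_nonneg _) hp1.le)
  have hle : ∀ x y : Kˣ, ‖(x : K)‖ < ε → ‖(y : K)‖ ≤ ‖(x : K)‖ → g y = g x := by
    intro x y hx hyx
    have hxp : 0 < ‖(x : K)‖ := norm_pos_iff.2 x.ne_zero
    have hyp : 0 < ‖(y : K)‖ := norm_pos_iff.2 y.ne_zero
    obtain ⟨m, hm1, hm2⟩ := exists_nat_pow_near_of_lt_one (x := ‖(y : K)‖ / ‖(x : K)‖)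
      (div_pos hyp hxp) ((div_le_one hxp).2 hyx) hp0 hp1
    have hpm : 0 < ‖p‖ ^ m := pow_pos hp0 m
    have hval : ‖((x⁻¹ * y * (ϖ ^ m)⁻¹ : Kˣ) : K)‖ = ‖(y : K)‖ / ‖(x : K)‖ / ‖p‖ ^ m := by
      rw [Units.val_mul, Units.val_mul, Units.val_inv_eq_inv_val, Units.val_inv_eq_inv_val,
        Units.val_pow_eq_pow_val, norm_mul, norm_mul, norm_inv, norm_inv, norm_pow]
      show ‖(x : K)‖⁻¹ * ‖(y : K)‖ * (‖p‖ ^ m)⁻¹ = _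
      rw [div_eq_mul_inv, div_eq_mul_inv, mul_comm (‖(x : K)‖⁻¹)]
    have hu : ‖p‖ ≤ ‖((x⁻¹ * y * (ϖ ^ m)⁻¹ : Kˣ) : K)‖ ∧
        ‖((x⁻¹ * y * (ϖ ^ m)⁻¹ : Kˣ) : K)‖ ≤ 1 := by
      rw [hval, le_div_iff₀ hpm, div_le_one hpm, ← pow_succ']
      exact ⟨hm1.le, hm2⟩
    have h1 := H _ hu x hx
    have h2 := hpow m (x * (x⁻¹ * y * (ϖ ^ m)⁻¹)) (by
      rw [Units.val_mul, norm_mul]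
      exact lt_of_le_of_lt (mul_le_of_le_one_right (norm_nonneg _) hu.2) hx)
    rw [h1] at h2
    rw [← h2]
    congr 1
    group
  obtain ⟨z, hz0, hz1⟩ := NormedField.exists_norm_lt K hε
  refine ⟨g (Units.mk0 z (norm_pos_iff.1 hz0)), ε, hε, fun x hx => ?_⟩
  rcases le_total ‖(x : K)‖ ‖z‖ with hxz | hxz
  · exact hle _ x hz1 hxz
  · exact (hle x (Units.mk0 z (norm_pos_iff.1 hz0)) hx hxz).symm

section Statements

open Aff

variable {K : Type*} [NontriviallyNormedField K] [IsUltrametricDist K] [ProperSpace K]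

theorem statement0
    (hchar : (2 : K) ≠ 0)
    (ψ : AddChar K ℂ) (hψlc : IsLocallyConstant (⇑ψ)) (hψne : ψ ≠ 1)
    (χ : Kˣ →* ℂˣ) (hχ : SmoothMulChar χ) :
    (∀ M : Submodule ℂ (K → ℂ), GRep.Invariant (repCc K ψ 1) M → M ≤ CcK K →
      M ⊓ tEigen (repCc K ψ 1) χ = ⊥ ∧ M ⊓ sInv (repCc K ψ 1) = ⊥) ∧
    (∀ M : Submodule ℂ (Kˣ → ℂ), GRep.Invariant (repCx K ψ) M → M ≤ Cb K →
      M ⊓ tEigen (repCx K ψ) χ = ⊥ ∧ M ⊓ sInv (repCx K ψ) = ⊥) ∧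
    Module.finrank ℂ (↥(quotEigen ψ χ) ⧸ (SSx K).comap (quotEigen ψ χ).subtype) = 1 := by
  have hχlc := aux_isLocallyConstant_char χ hχ
  refine ⟨fun M _ hM => ⟨?_, ?_⟩, fun M _ hM => ⟨?_, ?_⟩, ?_⟩
  · rw [eq_bot_iff]
    rintro f ⟨hfM, hf⟩
    obtain ⟨hlc, hcs⟩ := hM hfM
    obtain ⟨R, hR⟩ := IsCompact.isBounded hcs |>.exists_norm_le
    have key : ∀ (x : K) (u : Kˣ), f (x * u) = (χ u : ℂ) * f x := by
      intro x u
      have := congrFun (hf u) x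
      simpa using this
    refine aux_zero f hlc fun x hx => ?_
    by_contra hne
    obtain ⟨u, hu⟩ := aux_exists_large (K := K) (R / ‖x‖)
    have h1 : f (x * u) ≠ 0 := by
      rw [key]; exact mul_ne_zero (χ u).ne_zero hne
    have h2 := hR _ (subset_closure h1)
    rw [norm_mul, mul_comm] at h2
    rw [div_lt_iff₀ (norm_pos_iff.2 hx)] at hu
    linarith
  · rw [eq_bot_iff]
    rintro f ⟨hfM, hf⟩
    obtain ⟨hlc, hcs⟩ := hM hfM
    refine aux_zero f hlc fun x hx => ?_
    obtain ⟨b, hb⟩ := aux_exists_psi ψ hψne x hx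
    have h1 := congrFun (hf b) x
    simp at h1
    exact by_contra fun hne => hb (mul_right_cancel₀ hne (h1.trans (one_mul _).symm))
  · rw [eq_bot_iff]
    rintro f ⟨hfM, hf⟩
    obtain ⟨hlc, R, hR⟩ := (aux_mem_Cb_iff f).1 (hM hfM)
    have key : ∀ (x : Kˣ) (u : Kˣ), f (x * u) = (χ u : ℂ) * f x := by
      intro x u
      have := congrFun (hf u) x
      simpa using this
    show f = 0
    funext x
    by_contra hne
    obtain ⟨u, hu⟩ := aux_exists_large (K := K) (R / ‖(x : K)‖)
    have h1 : f (x * u) ≠ 0 := by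
      rw [key]; exact mul_ne_zero (χ u).ne_zero hne
    have h2 := hR _ h1
    rw [Units.val_mul, norm_mul, mul_comm] at h2
    rw [div_lt_iff₀ (norm_pos_iff.2 x.ne_zero)] at hu
    linarith
  · rw [eq_bot_iff]
    rintro f ⟨hfM, hf⟩
    show f = 0
    funext x
    obtain ⟨b, hb⟩ := aux_exists_psi ψ hψne x x.ne_zero
    have h1 := congrFun (hf b) x
    simp at h1
    show f x = 0
    exact by_contra fun hne => hb (mul_right_cancel₀ hne (h1.trans (one_mul _).symm))
  · -- the standard generator
    let f₀ : Kˣ → ℂ := fun x => if ‖(x : K)‖ ≤ 1 then (χ x : ℂ) else 0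
    have hind : IsLocallyConstant (fun x : Kˣ => if ‖(x : K)‖ ≤ 1 then (1 : ℂ) else 0) := by
      have h1 : IsClopen {x : Kˣ | ‖(x : K)‖ ≤ 1} := by
        have := (IsUltrametricDist.isClopen_closedBall (0 : K) one_ne_zero).preimage
          (Units.continuous_val (M := K))
        convert this using 1
        ext x; simp
      rw [IsLocallyConstant.iff_eventually_eq]
      intro x
      by_cases hx : ‖(x : K)‖ ≤ 1
      · filter_upwards [h1.isOpen.mem_nhds hx] with y hy
        rw [if_pos hx, if_pos hy]
      · filter_upwards [h1.compl.isOpen.mem_nhds hx] with y hy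
        rw [if_neg hx]
        exact if_neg hy
    have hf₀lc : IsLocallyConstant f₀ := by
      have := hχlc.mul hind
      convert this using 1
      funext x
      simp [f₀]
    have hf₀Cb : f₀ ∈ Cb K := by
      rw [aux_mem_Cb_iff]
      refine ⟨hf₀lc, 1, fun x hx => ?_⟩
      by_contra hcon
      exact hx (if_neg hcon)
    have hshift : ∀ (f : Kˣ → ℂ), f ∈ Cb K → ∀ u : Kˣ,
        repCx K ψ (Aff.xT u) f - (χ u : ℂ) • f ∈ Cb K := by
      intro f hf u
      refine (Cb K).sub_mem ?_ ((Cb K).smul_mem _ hf)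
      obtain ⟨hlc, R, hR⟩ := (aux_mem_Cb_iff f).1 hf
      rw [aux_mem_Cb_iff]
      have heq : repCx K ψ (Aff.xT u) f = f ∘ (fun x => x * u) := by
        funext x; simp
      rw [heq]
      refine ⟨hlc.comp_continuous (by fun_prop), R / ‖(u : K)‖, fun x hx => ?_⟩
      rw [le_div_iff₀ (norm_pos_iff.2 u.ne_zero), ← norm_mul, ← Units.val_mul]
      exact hR _ hx
    have hf₀q : f₀ ∈ quotEigen ψ χ := by
      refine ⟨hf₀Cb, fun u => (aux_mem_SSx_iff _ (hshift f₀ hf₀Cb u)).2 ?_⟩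
      have hu0 : 0 < ‖(u : K)‖ := norm_pos_iff.2 u.ne_zero
      refine ⟨min 1 (1 / ‖(u : K)‖), by positivity, fun x hx => ?_⟩
      have h1 : ‖(x : K)‖ ≤ 1 := (hx.trans_le (min_le_left _ _)).le
      have h2 : ‖((x * u : Kˣ) : K)‖ ≤ 1 := by
        rw [Units.val_mul, norm_mul]
        exact ((lt_div_iff₀ hu0).1 (hx.trans_le (min_le_right _ _))).le
      have e1 : f₀ x = (χ x : ℂ) := if_pos h1
      have e2 : f₀ (x * u) = (χ (x * u) : ℂ) := if_pos h2
      simp only [Pi.sub_apply, Pi.smul_apply, repCx_apply, xT_s, xT_t, zero_mul,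
        AddChar.map_zero_eq_one, one_mul, e1, e2, map_mul, Units.val_mul, smul_eq_mul]
      ring
    refine finrank_eq_one (Submodule.Quotient.mk ⟨f₀, hf₀q⟩) ?_ ?_
    · intro h0
      rw [Submodule.Quotient.mk_eq_zero] at h0
      have h0' : f₀ ∈ SSx K := h0
      obtain ⟨ε, hε, hz⟩ := (aux_mem_SSx_iff f₀ hf₀Cb).1 h0'
      obtain ⟨z, hz0, hz1⟩ := NormedField.exists_norm_lt K (lt_min hε one_pos)
      have h1 := hz (Units.mk0 z (norm_pos_iff.1 hz0)) (hz1.trans_le (min_le_left _ _))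
      have h2 : f₀ (Units.mk0 z (norm_pos_iff.1 hz0))
          = (χ (Units.mk0 z (norm_pos_iff.1 hz0)) : ℂ) :=
        if_pos (hz1.trans_le (min_le_right _ _)).le
      rw [h2] at h1
      exact (χ _).ne_zero h1
    · intro w
      obtain ⟨⟨f, hf⟩, rfl⟩ := Submodule.Quotient.mk_surjective _ w
      have hfC : f ∈ Cb K := hf.1
      obtain ⟨c, ε, hε, hc⟩ := aux_const (K := K) (fun x => f x * ((χ x : ℂ))⁻¹)
        (((aux_mem_Cb_iff f).1 hfC).1.mul (hχlc.comp (fun z => z⁻¹))) (by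
          intro u
          obtain ⟨ε, hε, h⟩ := (aux_mem_SSx_iff _ (hshift f hfC u)).1 (hf.2 u)
          refine ⟨ε, hε, fun x hx => ?_⟩
          have h1 := h x hx
          simp only [Pi.sub_apply, Pi.smul_apply, repCx_apply, xT_s, xT_t, zero_mul,
            AddChar.map_zero_eq_one, one_mul, smul_eq_mul, sub_eq_zero] at h1
          have hx0 := (χ x).ne_zero
          have hu0 := (χ u).ne_zero
          simp only [h1, map_mul, Units.val_mul]
          field_simp)
      refine ⟨c, ?_⟩
      rw [← Submodule.Quotient.mk_smul, Submodule.Quotient.eq]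
      show c • f₀ - f ∈ SSx K
      rw [aux_mem_SSx_iff _ ((Cb K).sub_mem ((Cb K).smul_mem _ hf₀Cb) hfC)]
      refine ⟨min ε 1, lt_min hε one_pos, fun x hx => ?_⟩
      have e1 : f₀ x = (χ x : ℂ) := if_pos (hx.trans_le (min_le_right _ _)).le
      have e2 := hc x (hx.trans_le (min_le_left _ _))
      have hx0 := (χ x).ne_zero
      simp only [Pi.sub_apply, Pi.smul_apply, smul_eq_mul, e1, ← e2]
      field_simp
      simp

end Statements

end PSW
end
end

section
/- Let X be a finite-dimensional smooth TS-module and s a natural number. Then every short exact sequence of TS-modules 0 → X → E → 𝕊^s → 0 splits; more precisely, the subgroup E(S) = ker(E → E_S) of E is a TS-submodule isomorphic to 𝕊^s and gives a splitting. -/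
noncomputable section

open scoped Classical

namespace PSW

section Statements

open Aff

variable {K : Type*} [NontriviallyNormedField K] [IsUltrametricDist K] [ProperSpace K]

/-- `S` acts trivially on a finite-dimensional smooth module. -/
lemma aux_finite_trivial {X : Type*} [AddCommGroup X] [Module ℂ X] [Module.Finite ℂ X]
    (ρ : Rep K X) (hρ : IsSmoothRep ρ) (b : K) (x : X) : ρ (sS b) x = x := by
  obtain ⟨S, hS⟩ := (Module.Finite.fg_top : (⊤ : Submodule ℂ X).FG)
  have hcont : Continuous (fun c : K => (sS c : Aff K)) := by
    rw [continuous_induced_rng]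
    exact (continuous_const.prodMk continuous_id)
  have hev : ∀ᶠ c in nhds (0 : K), ∀ y ∈ S, ρ (sS c) y = y := by
    rw [Filter.eventually_all_finset]
    intro y _
    have := (hρ y).preimage hcont
    refine this.mem_nhds ?_
    show ρ (sS 0) y = y
    have h1 : (sS 0 : Aff K) = 1 := rfl
    rw [h1, map_one]; rfl
  have hev2 : ∀ᶠ c in nhds (0 : K), ∀ y : X, ρ (sS c) y = y := by
    filter_upwards [hev] with c hc y
    have h : Submodule.span ℂ (S : Set X) ≤ LinearMap.eqLocus (ρ (sS c)) LinearMap.id :=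
      Submodule.span_le.2 fun y hy => hc y hy
    rw [hS] at h
    exact h (Submodule.mem_top : y ∈ ⊤)
  have ht : Filter.Tendsto (fun l : K => l * b) (nhdsWithin 0 {0}ᶜ) (nhds 0) := by
    have : Filter.Tendsto (fun l : K => l * b) (nhds 0) (nhds (0 * b)) :=
      (continuous_id.mul continuous_const).tendsto 0
    rw [zero_mul] at this
    exact this.mono_left nhdsWithin_le_nhds
  obtain ⟨l, hl, hl0⟩ := ((ht.eventually hev2).and self_mem_nhdsWithin).exists
  have hl0' : l ≠ 0 := hl0
  have key : ρ (xT (Units.mk0 l hl0')) (ρ (sS b) x) = ρ (xT (Units.mk0 l hl0')) x := by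
    rw [← Module.End.mul_apply, ← map_mul, mul_sS, map_mul, Module.End.mul_apply]
    exact hl _
  have := congrArg (ρ (xT (Units.mk0 l hl0'))⁻¹) key
  simpa only [← Module.End.mul_apply, ← map_mul, inv_mul_cancel_left, inv_mul_cancel, map_one,
    Module.End.one_apply] using this

/-- Every element of `K` is torsion modulo any neighbourhood of `0`. -/
lemma aux_torsion (b : K) (U : Set K) (hU : U ∈ nhds (0 : K)) :
    ∃ n : ℕ, 0 < n ∧ (n : K) * b ∈ U := by
  obtain ⟨ε, hε, hεU⟩ := Metric.mem_nhds_iff.1 hU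
  have hmem : ∀ n : ℕ, (n : K) * b ∈ Metric.closedBall (0 : K) ‖b‖ := by
    intro n
    rw [mem_closedBall_zero_iff, norm_mul]
    exact mul_le_of_le_one_left (norm_nonneg _) (IsUltrametricDist.norm_natCast_le_one K n)
  obtain ⟨a, -, φ, hφ, hlim⟩ := (isCompact_closedBall (0 : K) ‖b‖).tendsto_subseq hmem
  obtain ⟨N, hN⟩ := Metric.cauchySeq_iff.1 hlim.cauchySeq ε hε
  have h := hN (N + 1) (by omega) N le_rfl
  have hlt : φ N < φ (N + 1) := hφ (by omega)
  refine ⟨φ (N + 1) - φ N, by omega, hεU ?_⟩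
  rw [mem_ball_zero_iff, Nat.cast_sub hlt.le, sub_mul, ← dist_eq_norm]
  exact h

lemma aux_sS_add (b c : K) : (sS b * sS c : Aff K) = sS (b + c) := by
  ext <;> simp

/-- Elements of `E(S)` are killed by some averaging operator. -/
lemma aux_avg {E : Type*} [AddCommGroup E] [Module ℂ E] (ρ : Rep K E) (hρ : IsSmoothRep ρ)
    (w : E) (hw : w ∈ sCoinvKer ρ) :
    ∃ A ∈ Set.centralizer (Set.centralizer (Set.range fun b : K => ρ (sS b))),
      (∀ x ∈ sInv ρ, A x = x) ∧ A w = 0 := by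
  set R : Set (Module.End ℂ E) := Set.range fun b : K => ρ (sS b) with hR
  have hRR : R ⊆ Set.centralizer R := by
    rintro _ ⟨b, rfl⟩ _ ⟨c, rfl⟩
    simp only [← map_mul, aux_sS_add, add_comm]
  have hcomm : ∀ A ∈ Set.centralizer (Set.centralizer R),
      ∀ B ∈ Set.centralizer (Set.centralizer R), A * B = B * A := by
    intro A hA B hB
    exact (hA B (Set.centralizer_subset hRR hB)).symm
  induction hw using Submodule.span_induction with
  | mem w h =>
    obtain ⟨b, v, rfl⟩ := h
    have hcont : Continuous (fun c : K => (sS c : Aff K)) := by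
      rw [continuous_induced_rng]
      exact (continuous_const.prodMk continuous_id)
    have hU : {c : K | ρ (sS c) v = v} ∈ nhds (0 : K) := by
      refine ((hρ v).preimage hcont).mem_nhds ?_
      show ρ (sS 0) v = v
      have h1 : (sS 0 : Aff K) = 1 := rfl
      rw [h1, map_one]; rfl
    obtain ⟨n, hn, hnb⟩ := aux_torsion b _ hU
    have hn0 : (n : ℂ) ≠ 0 := by exact_mod_cast hn.ne'
    refine ⟨(n : ℂ)⁻¹ • ∑ i ∈ Finset.range n, ρ (sS ((i : K) * b)), ?_, ?_, ?_⟩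
    · intro B hB
      rw [mul_smul_comm, smul_mul_assoc, Finset.mul_sum, Finset.sum_mul]
      congr 1
      refine Finset.sum_congr rfl fun i _ => ?_
      exact (hB _ ⟨_, rfl⟩).symm
    · intro x hx
      rw [mem_sInv] at hx
      rw [LinearMap.smul_apply, LinearMap.sum_apply, Finset.sum_congr rfl fun i _ => hx _]
      rw [Finset.sum_const, Finset.card_range, ← Nat.cast_smul_eq_nsmul ℂ, smul_smul,
        inv_mul_cancel₀ hn0, one_smul]
    · rw [LinearMap.smul_apply, LinearMap.sum_apply]
      have : ∀ i ∈ Finset.range n, ρ (sS ((i : K) * b)) (ρ (sS b) v - v)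
          = ρ (sS (((i + 1 : ℕ) : K) * b)) v - ρ (sS ((i : K) * b)) v := by
        intro i _
        rw [map_sub, ← Module.End.mul_apply, ← map_mul, aux_sS_add]
        congr 4
        push_cast; ring
      rw [Finset.sum_congr rfl this, Finset.sum_range_sub (fun i : ℕ => ρ (sS ((i : K) * b)) v)]
      have h1 : (sS (((0 : ℕ) : K) * b) : Aff K) = 1 := by ext <;> simp
      have h2 : ρ (sS ((n : K) * b)) v = v := hnb
      rw [h1, h2, map_one, Module.End.one_apply, sub_self, smul_zero]
  | zero => exact ⟨1, fun B _ => by simp, fun x _ => rfl, map_zero _⟩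
  | add v w _ _ hv hw =>
    obtain ⟨A, hA, hA1, hA2⟩ := hv
    obtain ⟨B, hB, hB1, hB2⟩ := hw
    refine ⟨A * B, Set.mul_mem_centralizer hA hB, ?_, ?_⟩
    · intro x hx
      rw [Module.End.mul_apply, hB1 x hx, hA1 x hx]
    · rw [map_add]
      nth_rewrite 1 [hcomm A hA B hB]
      rw [Module.End.mul_apply, Module.End.mul_apply, hA2, hB2, map_zero, map_zero, add_zero]
  | smul c v _ hv =>
    obtain ⟨A, hA, hA1, hA2⟩ := hv
    exact ⟨A, hA, hA1, by rw [map_smul, hA2, smul_zero]⟩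

/-- `𝕊_S = 0`. -/
lemma aux_SRep_coinv (ψ : AddChar K ℂ) (hψlc : IsLocallyConstant (⇑ψ)) (hψne : ψ ≠ 1)
    (f : ↥(SSx K)) : f ∈ sCoinvKer (SRep ψ hψlc) := by
  have hlcb : ∀ b : K, IsLocallyConstant (fun x : Kˣ => ψ (b * (x : K))) := fun b =>
    hψlc.comp_continuous (continuous_const.mul Units.continuous_val)
  have main : ∀ (F : Finset K) (f : ↥(SSx K)),
      (∀ x : Kˣ, (f : Kˣ → ℂ) x ≠ 0 → ∃ b ∈ F, ψ (b * (x : K)) ≠ 1) →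
      f ∈ sCoinvKer (SRep ψ hψlc) := by
    intro F
    induction F using Finset.induction_on with
    | empty =>
      intro f hf
      have : f = 0 := by
        apply Subtype.ext; funext x
        by_contra h
        obtain ⟨b, hb, -⟩ := hf x h
        simp at hb
      rw [this]; exact Submodule.zero_mem _
    | insert b F _ ih =>
      intro f hf
      have hg : (fun x : Kˣ => (f : Kˣ → ℂ) x / (ψ (b * (x : K)) - 1)) ∈ SSx K := by
        refine ⟨f.2.1.comp₂ (hlcb b) (fun z w => z / (w - 1)), f.2.2.mono ?_⟩
        intro x hx h0
        apply hx
        show (f : Kˣ → ℂ) x / _ = 0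
        rw [h0, zero_div]
      set g : ↥(SSx K) := ⟨_, hg⟩ with hgdef
      have h1 : SRep ψ hψlc (sS b) g - g ∈ sCoinvKer (SRep ψ hψlc) :=
        Submodule.subset_span ⟨b, g, rfl⟩
      have hval : ∀ x : Kˣ, ((SRep ψ hψlc (sS b) g - g : ↥(SSx K)) : Kˣ → ℂ) x
          = (ψ (b * (x : K)) - 1) * ((f : Kˣ → ℂ) x / (ψ (b * (x : K)) - 1)) := by
        intro x
        show ψ (b * (x : K)) * ((f : Kˣ → ℂ) (x * 1) / (ψ (b * ((x * 1 : Kˣ) : K)) - 1))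
          - (f : Kˣ → ℂ) x / (ψ (b * (x : K)) - 1) = _
        rw [mul_one]; ring
      have h2 : f - (SRep ψ hψlc (sS b) g - g) ∈ sCoinvKer (SRep ψ hψlc) := by
        apply ih
        intro x hx
        have hx' : (f : Kˣ → ℂ) x
            - (ψ (b * (x : K)) - 1) * ((f : Kˣ → ℂ) x / (ψ (b * (x : K)) - 1)) ≠ 0 := by
          rw [← hval x]; exact hx
        have hb1 : ψ (b * (x : K)) = 1 := by
          by_contra h
          apply hx'
          rw [mul_div_cancel₀ _ (sub_ne_zero.2 h), sub_self]
        have hfx : (f : Kˣ → ℂ) x ≠ 0 := by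
          intro h; apply hx'; rw [h]; simp
        obtain ⟨c, hc, hc1⟩ := hf x hfx
        rcases Finset.mem_insert.1 hc with rfl | hc
        · exact absurd hb1 hc1
        · exact ⟨c, hc, hc1⟩
      have := Submodule.add_mem _ h2 h1
      rwa [sub_add_cancel] at this
  obtain ⟨b₀, hb₀⟩ : ∃ b₀ : K, ψ b₀ ≠ 1 := by
    by_contra! h
    exact hψne (by ext x; simpa using h x)
  have hcov : tsupport (f : Kˣ → ℂ) ⊆ ⋃ b : K, {x : Kˣ | ψ (b * (x : K)) ≠ 1} := by
    intro x _
    rw [Set.mem_iUnion]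
    refine ⟨b₀ * ((x⁻¹ : Kˣ) : K), ?_⟩
    show ψ (b₀ * ((x⁻¹ : Kˣ) : K) * (x : K)) ≠ 1
    rw [Units.inv_mul_cancel_right]
    exact hb₀
  obtain ⟨F, hF⟩ := IsCompact.elim_finite_subcover (f.2.2 : IsCompact (tsupport (f : Kˣ → ℂ)))
    _ (fun b => (hlcb b) {z | z ≠ 1}) hcov
  refine main F f fun x hx => ?_
  have := hF (subset_tsupport _ hx)
  simpa using this

/-- `(𝕊^s)_S = 0`. -/
lemma aux_SRepPow_coinv (ψ : AddChar K ℂ) (hψlc : IsLocallyConstant (⇑ψ)) (hψne : ψ ≠ 1)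
    (s : ℕ) (f : Fin s → ↥(SSx K)) : f ∈ sCoinvKer (SRepPow ψ hψlc s) := by
  have h : f = ∑ i, LinearMap.single ℂ (fun _ : Fin s => ↥(SSx K)) i (f i) := by
    simp [Finset.univ_sum_single]
  rw [h]
  refine Submodule.sum_mem _ fun i _ => ?_
  refine sCoinvKer_le_comap (SRep ψ hψlc) (SRepPow ψ hψlc s)
    (LinearMap.single ℂ (fun _ : Fin s => ↥(SSx K)) i) ?_ (aux_SRep_coinv ψ hψlc hψne (f i))
  intro g v
  funext j
  show (Pi.single i (SRep ψ hψlc g v) : Fin s → ↥(SSx K)) j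
    = SRep ψ hψlc g ((Pi.single i v : Fin s → ↥(SSx K)) j)
  by_cases hij : j = i
  · subst hij; simp
  · simp [hij]

theorem statement6
    (hchar : (2 : K) ≠ 0)
    (ψ : AddChar K ℂ) (hψlc : IsLocallyConstant (⇑ψ)) (hψne : ψ ≠ 1)
    {X E : Type*} [AddCommGroup X] [Module ℂ X] [Module.Finite ℂ X]
    [AddCommGroup E] [Module ℂ E]
    (ρX : Rep K X) (hρX : IsSmoothRep ρX)
    (ρE : Rep K E) (hρE : IsSmoothRep ρE)
    (s : ℕ)
    (ι : X →ₗ[ℂ] E) (hι : GRep.Equivariant ρX ρE ι) (hιinj : Function.Injective ι)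
    (π : E →ₗ[ℂ] (Fin s → ↥(SSx K))) (hπ : GRep.Equivariant ρE (SRepPow ψ hψlc s) π)
    (hπsurj : Function.Surjective π) (hexact : LinearMap.ker π = LinearMap.range ι) :
    (∃ σ : (Fin s → ↥(SSx K)) →ₗ[ℂ] E,
      GRep.Equivariant (SRepPow ψ hψlc s) ρE σ ∧ π.comp σ = LinearMap.id) ∧
    IsCompl (LinearMap.range ι) (sCoinvKer ρE) ∧
    GRep.Iso (GRep.sub ρE (sCoinvKer_invariant ρE)) (SRepPow ψ hψlc s) := by
  have hrange : LinearMap.range ι ≤ sInv ρE := by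
    rintro _ ⟨x, rfl⟩ b
    rw [← hι, aux_finite_trivial ρX hρX]
  have hdisj : Disjoint (LinearMap.range ι) (sCoinvKer ρE) := by
    rw [Submodule.disjoint_def]
    intro w hw1 hw2
    obtain ⟨A, -, hA1, hA2⟩ := aux_avg ρE hρE w hw2
    rw [← hA1 w (hrange hw1), hA2]
  have hsurj : ∀ f : Fin s → ↥(SSx K), ∃ w ∈ sCoinvKer ρE, π w = f := by
    intro f
    have hle : sCoinvKer (SRepPow ψ hψlc s) ≤ (sCoinvKer ρE).map π := by
      refine Submodule.span_le.2 ?_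
      rintro _ ⟨b, v, rfl⟩
      obtain ⟨e, rfl⟩ := hπsurj v
      refine ⟨ρE (sS b) e - e, Submodule.subset_span ⟨b, e, rfl⟩, ?_⟩
      rw [map_sub, hπ]
    exact hle (aux_SRepPow_coinv ψ hψlc hψne s f)
  have hcompl : IsCompl (LinearMap.range ι) (sCoinvKer ρE) := by
    refine ⟨hdisj, ?_⟩
    rw [codisjoint_iff, Submodule.eq_top_iff']
    intro e
    obtain ⟨w, hw, hwe⟩ := hsurj (π e)
    refine Submodule.mem_sup.2 ⟨e - w, ?_, w, hw, sub_add_cancel e w⟩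
    rw [← hexact, LinearMap.mem_ker, map_sub, hwe, sub_self]
  have hbij : Function.Bijective (π.domRestrict (sCoinvKer ρE)) := by
    constructor
    · rw [← LinearMap.ker_eq_bot, LinearMap.ker_eq_bot']
      intro w hw
      apply Subtype.ext
      refine (Submodule.disjoint_def.1 hdisj) w ?_ w.2
      rw [← hexact]; exact hw
    · intro f
      obtain ⟨w, hw, hwf⟩ := hsurj f
      exact ⟨⟨w, hw⟩, hwf⟩
  let e := LinearEquiv.ofBijective (π.domRestrict (sCoinvKer ρE)) hbij
  have he : ∀ (g : Aff K) (v : ↥(sCoinvKer ρE)),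
      e (GRep.sub ρE (sCoinvKer_invariant ρE) g v) = SRepPow ψ hψlc s g (e v) :=
    fun g v => hπ g v
  refine ⟨⟨(sCoinvKer ρE).subtype.comp e.symm.toLinearMap, ?_, ?_⟩, hcompl, e, he⟩
  · intro g v
    have h : e.symm (SRepPow ψ hψlc s g v)
        = GRep.sub ρE (sCoinvKer_invariant ρE) g (e.symm v) := by
      rw [LinearEquiv.symm_apply_eq, he, LinearEquiv.apply_symm_apply]
    show ((e.symm (SRepPow ψ hψlc s g v) : ↥(sCoinvKer ρE)) : E) = ρE g (e.symm v : E)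
    rw [h]; rfl
  · apply LinearMap.ext
    intro v
    exact e.apply_symm_apply v

end Statements

end PSW
end
end
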